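/- Let R be a commutative Noetherian ring, let M be an R-module with inj.dim_R(M) = c < ∞, and let p be a prime ideal of R. Suppose the set of associated primes of H_p^c(M) is the finite set {p, q_1, …, q_m}, where p is strictly contained in q_i for each i. Set J = q_1 ⋯ q_m. Then the natural localization map H_p^c(M) → (H_p^c(M))_p induces an isomorphism H_p^c(M) / Γ_J(H_p^c(M)) ≅ (H_p^c(M))_p. -/

import Mathlib

open CategoryTheory Opposite

noncomputable section

/-- `M` has injective dimension at most `n` (as `R`-module), characterized by
vanishing of `Ext^i(N, M)` for all `i > n`. -/
def injDimLE (R : Type) [CommRing R] (M : Type) [AddCommGroup M] [Module R M] (n : ℕ) : Prop :=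
  ∀ (N : ModuleCat R) (i : ℕ), n < i →
    Subsingleton (((Ext R (ModuleCat R) i).obj (op N)).obj (ModuleCat.of R M))

/-- The injective dimension of `M` as an `R`-module, valued in `ℕ∞`. -/
def injDim (R : Type) [CommRing R] (M : Type) [AddCommGroup M] [Module R M] : ℕ∞ :=
  sInf {n : ℕ∞ | ∃ m : ℕ, (m : ℕ∞) = n ∧ injDimLE R M m}

/-- The `J`-torsion submodule `Γ_J(M) = {m ∈ M | J^k m = 0 for some k}`. -/
def torsionSubmodule (R : Type) [CommRing R] (J : Ideal R)
    (M : Type) [AddCommGroup M] [Module R M] : Submodule R M :=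
  ⨆ k : ℕ, Submodule.torsionBySet R M ((J ^ k : Ideal R) : Set R)

section helpers

variable {R : Type} [CommRing R]

abbrev yoMap {X X' : ModuleCat.{0} R} {P : ProjectiveResolution X} {P' : ProjectiveResolution X'}
   (φ : P'.complex ⟶ P.complex) (Y : ModuleCat.{0} R) :
   P.complex.linearYonedaObj R Y ⟶ P'.complex.linearYonedaObj R Y :=
  (HomologicalComplex.unopFunctor _ _).map
    (((((linearYoneda R (ModuleCat.{0} R)).obj Y).rightOp.mapHomologicalComplex _).map φ).op)

lemma glue {C : Type*} [Category C] {E E' A A' B B' : C} {a : E ⟶ E'} {i : E ⟶ A} {i' : E' ⟶ A'}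
  {H : A ⟶ A'} {m : B ⟶ B'} (u : B ≅ A) (u' : B' ≅ A') (h1 : a ≫ i' = i ≫ H) (h2 : u.hom ≫ H = m ≫ u'.hom) :
  a ≫ i' ≫ u'.inv = (i ≫ u.inv) ≫ m := by
  rw [← Category.assoc, h1, Category.assoc, Category.assoc]
  congr 1
  rw [Iso.comp_inv_eq, Category.assoc, ← h2, u.inv_hom_id_assoc]

lemma isoExt_nat {X X' : ModuleCat.{0} R} (P : ProjectiveResolution X) (P' : ProjectiveResolution X')
   (g : X' ⟶ X) (φ : P'.complex ⟶ P.complex) (comm : φ.f 0 ≫ P.π.f 0 = P'.π.f 0 ≫ g) (Y : ModuleCat.{0} R) (n : ℕ) :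
   ((Ext R (ModuleCat R) n).map g.op).app Y ≫ (P'.isoExt n Y).hom =
   (P.isoExt n Y).hom ≫ HomologicalComplex.homologyMap (yoMap φ Y) n := by
  have h1 := congrArg Quiver.Hom.unop (ProjectiveResolution.isoLeftDerivedObj_inv_naturality g P' P φ comm ((linearYoneda R (ModuleCat.{0} R)).obj Y).rightOp n)
  have h2 := congrArg Quiver.Hom.unop (HomologicalComplex.homologyOp_hom_naturality (yoMap φ Y) n)
  exact glue ((((linearYoneda R (ModuleCat R)).obj Y).rightOp.mapHomologicalComplex (ComplexShape.down ℕ)).obj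
                  P.complex |>.homologyUnop n) ((((linearYoneda R (ModuleCat R)).obj Y).rightOp.mapHomologicalComplex (ComplexShape.down ℕ)).obj
                  P'.complex |>.homologyUnop n) h1 h2

/-- relation -/
def CRep {X Y : ModuleCat.{0} R} (P : ProjectiveResolution X) {n : ℕ} (f : P.complex.X n ⟶ Y)
    (x : ((Ext R (ModuleCat R) n).obj (op X)).obj Y) : Prop :=
  ∃ z : (P.complex.linearYonedaObj R Y).cycles n,
    (P.complex.linearYonedaObj R Y).iCycles n z = f ∧
    (P.complex.linearYonedaObj R Y).homologyπ n z = (P.isoExt n Y).hom x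

variable {X Y : ModuleCat.{0} R} {P : ProjectiveResolution X} {n : ℕ}

lemma rep_exists (P : ProjectiveResolution X) (x : ((Ext R (ModuleCat R) n).obj (op X)).obj Y) :
    ∃ f : P.complex.X n ⟶ Y, P.complex.d (n+1) n ≫ f = 0 ∧ CRep P f x := by
  obtain ⟨z, hz⟩ := (ModuleCat.epi_iff_surjective ((P.complex.linearYonedaObj R Y).homologyπ n)).1
    inferInstance ((P.isoExt n Y).hom x)
  refine ⟨(P.complex.linearYonedaObj R Y).iCycles n z, ?_, z, rfl, hz⟩
  have := (P.complex.linearYonedaObj R Y).iCycles_d n (n+1)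
  exact congrArg (fun q => q.hom z) this

lemma exists_rep (f : P.complex.X n ⟶ Y) (hf : P.complex.d (n+1) n ≫ f = 0) :
    ∃ x, CRep (R := R) P f x := by
  let K := P.complex.linearYonedaObj R Y
  have hn : (ComplexShape.up ℕ).next n = n+1 := by simp
  refine ⟨(P.isoExt n Y).inv (K.homologyπ n (K.cyclesMk (C := ModuleCat R) f (n+1) hn hf)), _,
    K.i_cyclesMk (C := ModuleCat R) f (n+1) hn hf, ?_⟩
  simp [K]

lemma CRep.map {X' : ModuleCat.{0} R} {P' : ProjectiveResolution X'}
   {g : X' ⟶ X} {φ : P'.complex ⟶ P.complex} (comm : φ.f 0 ≫ P.π.f 0 = P'.π.f 0 ≫ g)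
   {f : P.complex.X n ⟶ Y} {x} (h : CRep (R := R) P f x) :
   CRep P' (φ.f n ≫ f) (((Ext R (ModuleCat R) n).map g.op).app Y x) := by
  obtain ⟨z, hz, hx⟩ := h
  refine ⟨HomologicalComplex.cyclesMap (yoMap φ Y) n z, ?_, ?_⟩
  · have := HomologicalComplex.cyclesMap_i (yoMap φ Y) n
    have := congrArg (fun q => q.hom z) this
    refine this.trans ?_
    rw [← hz]; rfl
  · have := HomologicalComplex.homologyπ_naturality (yoMap φ Y) n
    have := congrArg (fun q => q.hom z) this
    refine this.symm.trans ?_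
    have h2 := congrArg (fun q => q.hom x) (isoExt_nat P P' g φ comm Y n)
    refine Eq.trans ?_ h2.symm
    exact congrArg _ hx

lemma CRep.smul (s : R) {f : P.complex.X n ⟶ Y} {x} (h : CRep (R := R) P f x) : CRep P (s • f) (s • x) := by
  obtain ⟨z, hz, hx⟩ := h
  refine ⟨s • z, ?_, ?_⟩
  · rw [map_smul, hz]; rfl
  · rw [map_smul, hx, map_smul]

lemma CRep.sub {f f' : P.complex.X n ⟶ Y} {x x'} (h : CRep (R := R) P f x) (h' : CRep (R := R) P f' x') : CRep P (f - f') (x - x') := by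
  obtain ⟨z, hz, hx⟩ := h
  obtain ⟨z', hz', hx'⟩ := h'
  refine ⟨z - z', ?_, ?_⟩
  · rw [map_sub, hz, hz']; rfl
  · rw [map_sub, hx, map_sub, hx']

lemma CRep.d {f : P.complex.X n ⟶ Y} {x} (h : CRep (R := R) P f x) : P.complex.d (n+1) n ≫ f = 0 := by
  obtain ⟨z, rfl, hx⟩ := h
  have := (P.complex.linearYonedaObj R Y).iCycles_d n (n+1)
  exact congrArg (fun q => q.hom z) this

lemma CRep.zero_iff {f : P.complex.X n ⟶ Y} {x} (h : CRep (R := R) P f x) (m : ℕ)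
    (hm : (ComplexShape.up ℕ).prev n = m) :
    x = 0 ↔ ∃ g : P.complex.X m ⟶ Y, P.complex.d n m ≫ g = f := by
  obtain ⟨z, rfl, hx⟩ := h
  let K := P.complex.linearYonedaObj R Y
  have e : x = 0 ↔ K.homologyπ n z = 0 := by
    rw [hx]
    exact (map_eq_zero_iff _ ((ModuleCat.mono_iff_injective (P.isoExt n Y).hom).1 inferInstance)).symm
  rw [e]
  have hinj := (ModuleCat.mono_iff_injective (K.iCycles n)).1 inferInstance
  constructor
  · intro hz
    have hex := ShortComplex.exact_of_g_is_cokernel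
      (ShortComplex.mk (K.toCycles m n) (K.homologyπ n) (K.toCycles_comp_homologyπ m n)) (K.homologyIsCokernel m n hm)
    obtain ⟨g, hg⟩ := (ShortComplex.moduleCat_exact_iff _).1 hex z hz
    refine ⟨g, ?_⟩
    have := congrArg (fun q => q.hom g) (K.toCycles_i m n)
    exact this.symm.trans (congrArg _ hg)
  · rintro ⟨g, hg⟩
    have : K.toCycles m n g = z := by
      apply hinj
      have := congrArg (fun q => q.hom g) (K.toCycles_i m n)
      exact this.trans hg
    rw [← this]
    exact congrArg (fun q => q.hom g) (K.toCycles_comp_homologyπ m n)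

lemma ext_extMk_zero {n : ℕ} (f : P.complex.X n ⟶ Y) 
    (hf : P.complex.d (n+1) n ≫ f = 0) (m : ℕ) (hm : (ComplexShape.up ℕ).prev n = m) 
    (h : P.extMk f (n+1) rfl hf = 0) : ∃ g : P.complex.X m ⟶ Y, P.complex.d n m ≫ g = f := by
  cases n with
  | succ p =>
    obtain rfl : p = m := by rw [← hm]; simp
    exact (P.extMk_eq_zero_iff f _ rfl hf p rfl).1 h
  | zero =>
    refine ⟨0, ?_⟩
    simp only [← P.extEquivCohomologyClass.apply_eq_iff_eq,
      ProjectiveResolution.extEquivCohomologyClass_extMk, ProjectiveResolution.extEquivCohomologyClass_zero,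
      CochainComplex.HomComplex.CohomologyClass.mk_eq_zero_iff] at h
    rw [CochainComplex.HomComplex.Cocycle.toSingleMk_mem_coboundaries_iff _ _ _ _ _ 1 (by simp)] at h
    obtain ⟨g, hg⟩ := h
    have hd : P.cochainComplex.d (-((0:ℕ):ℤ)) 1 = 0 := by
      apply Limits.IsZero.eq_of_tgt
      exact P.cochainComplex.isZero_of_isStrictlyLE 0 1
    rw [hd] at hg
    have hf0 : f = 0 := by simpa using hg.symm
    rw [hf0, Limits.comp_zero]

/-- lift -/
lemma exists_hom {X' : ModuleCat.{0} R} (P' : ProjectiveResolution X') (P : ProjectiveResolution X) (g : X' ⟶ X) :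
    Nonempty (ProjectiveResolution.Hom P' P g) :=
  ⟨⟨ProjectiveResolution.lift g P' P, by
    have := congrArg (fun q => q.f 0) (ProjectiveResolution.lift_commutes g P' P)
    exact this⟩⟩

lemma ext_zero (n : ℕ) (hX : Subsingleton (((Ext R (ModuleCat R) (n+1)).obj (op X)).obj Y))
    (α : Abelian.Ext X Y (n+1)) : α = 0 := by
  obtain ⟨f, hf, rfl⟩ := (projectiveResolution X).extMk_surjective α _ rfl
  obtain ⟨x, hx⟩ := exists_rep (P := projectiveResolution X) f hf
  rw [ProjectiveResolution.extMk_eq_zero_iff _ _ _ _ _ n rfl]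
  exact (hx.zero_iff n (by simp)).1 (Subsingleton.elim _ _)

lemma ext_map_surj (n : ℕ) (hY : ∀ X : ModuleCat.{0} R, Subsingleton (((Ext R (ModuleCat R) (n+1)).obj (op X)).obj Y))
    {X X' : ModuleCat.{0} R} (g : X' ⟶ X) [Mono g] :
    Function.Surjective (((Ext R (ModuleCat R) n).map g.op).app Y) := by
  intro x'
  let P' := projectiveResolution X'
  let P := projectiveResolution X
  obtain ⟨φ⟩ := exists_hom P' P g
  have comm : φ.hom.f 0 ≫ P.π.f 0 = P'.π.f 0 ≫ g := φ.hom_f_zero_comp_π_f_zero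
  obtain ⟨f, hf, hfx⟩ := rep_exists P' x'
  have hS : (ShortComplex.mk g (Limits.cokernel.π g) (by simp)).ShortExact :=
    { exact := ShortComplex.exact_cokernel g }
  obtain ⟨y, hy⟩ := Abelian.Ext.contravariant_sequence_exact₁ hS _ (P'.extMk f _ rfl hf) (add_comm 1 n)
    (ext_zero n (hY _) _)
  obtain ⟨k, hk, rfl⟩ := P.extMk_surjective y _ rfl
  obtain ⟨x, hx⟩ := exists_rep (P := P) k hk
  refine ⟨x, ?_⟩
  have h1 := (hx.map comm).sub hfx
  rw [← sub_eq_zero, h1.zero_iff _ rfl]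
  refine ext_extMk_zero _ h1.d _ rfl ?_
  rw [← ProjectiveResolution.sub_extMk _ _ _ _ _ (hx.map comm).d hfx.d, sub_eq_zero, ← hy]
  exact (ProjectiveResolution.mk₀_comp_extMk k _ rfl hk φ).symm

lemma ext_map_smul (n : ℕ) (s : R) (x : ((Ext R (ModuleCat R) n).obj (op X)).obj Y) :
    ((Ext R (ModuleCat R) n).map (s • 𝟙 X).op).app Y x = s • x := by
  let P := projectiveResolution X
  obtain ⟨f, hf, hfx⟩ := rep_exists P x
  have h1 := hfx.map (P' := P) (φ := s • 𝟙 P.complex) (g := s • 𝟙 X) (by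
    rw [HomologicalComplex.smul_f_apply]
    refine (Linear.smul_comp _ _ _ s (𝟙 _) (P.π.f 0)).trans ?_
    refine Eq.trans ?_ (Linear.comp_smul _ _ _ (P.π.f 0) s (𝟙 X)).symm
    exact congrArg (s • ·) ((Category.id_comp _).trans (Category.comp_id _).symm))
  have h2 := h1.sub (hfx.smul s)
  rw [← sub_eq_zero, h2.zero_iff _ rfl]
  refine ⟨0, ?_⟩
  simp [HomologicalComplex.smul_f_apply]

/-- key -/
lemma ext_div (n : ℕ) (hY : ∀ X : ModuleCat.{0} R, Subsingleton (((Ext R (ModuleCat R) (n+1)).obj (op X)).obj Y))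
    (X : ModuleCat.{0} R) [IsNoetherian R X] (s : R) (x : ((Ext R (ModuleCat R) n).obj (op X)).obj Y) :
    ∃ (k : ℕ) (y : ((Ext R (ModuleCat R) n).obj (op X)).obj Y), s ^ k • x = s ^ (k + 1) • y := by
  -- stabilisation
  let L : X →ₗ[R] X := s • LinearMap.id
  have hL : ∀ k (v : X), (L ^ k) v = s ^ k • v := by
    intro k
    induction k with
    | zero => simp
    | succ k ih => intro v; rw [pow_succ', Module.End.mul_apply, ih, pow_succ', mul_smul]; rfl
  obtain ⟨k, hk⟩ := monotone_stabilizes_iff_noetherian.2 ‹IsNoetherian R X› L.iterateKer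
  have hker : LinearMap.ker (L ^ (k+1)) ≤ LinearMap.ker (L ^ k) := (hk (k+1) (by omega)).ge
  let K := LinearMap.range (L ^ (k+1))
  let ψ : K →ₗ[R] X :=
    ((LinearMap.ker (L ^ (k+1))).liftQ (L ^ k) hker) ∘ₗ (L ^ (k+1)).quotKerEquivRange.symm.toLinearMap
  have hψ : ∀ v, ψ ((L ^ (k+1)).rangeRestrict v) = (L ^ k) v := by
    intro v
    have : (L ^ (k+1)).quotKerEquivRange.symm ((L ^ (k+1)).rangeRestrict v) = Submodule.Quotient.mk v := by
      rw [LinearEquiv.symm_apply_eq]; rfl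
    simp only [ψ, LinearMap.comp_apply, LinearEquiv.coe_coe, this]
    rfl
  let ι : ModuleCat.of R K ⟶ X := ModuleCat.ofHom K.subtype
  let π : X ⟶ ModuleCat.of R K := ModuleCat.ofHom (L ^ (k+1)).rangeRestrict
  let ψ' : ModuleCat.of R K ⟶ X := ModuleCat.ofHom ψ
  have : Mono ι := (ModuleCat.mono_iff_injective _).2 K.injective_subtype
  have e1 : π ≫ ι = s ^ (k+1) • 𝟙 X := by
    ext v
    exact hL (k + 1) v
  have e2 : π ≫ ψ' = s ^ k • 𝟙 X := by
    ext v
    exact (hψ v).trans (hL k v)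
  obtain ⟨y, hy⟩ := ext_map_surj n hY ι (((Ext R (ModuleCat R) n).map ψ'.op).app Y x)
  refine ⟨k, y, ?_⟩
  rw [← ext_map_smul, ← ext_map_smul, ← e1, ← e2, op_comp, op_comp, Functor.map_comp, Functor.map_comp,
    NatTrans.comp_app, NatTrans.comp_app, ModuleCat.comp_apply, ModuleCat.comp_apply, hy]

lemma lc_div (p : Ideal R) [IsNoetherianRing R] (n : ℕ) (hY : ∀ X : ModuleCat.{0} R, Subsingleton (((Ext R (ModuleCat R) (n+1)).obj (op X)).obj Y))
    (s : R) (x : (localCohomology p n).obj Y) :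
    ∃ (k : ℕ) (y : (localCohomology p n).obj Y), s ^ k • x = s ^ (k + 1) • y := by
  let D := localCohomology.diagram (localCohomology.idealPowersDiagram p) n
  have := localCohomology.hasColimitDiagram.{0,0} (localCohomology.idealPowersDiagram p) n
  have hc := Limits.isColimitOfPreserves ((evaluation _ _).obj Y ⋙ forget (ModuleCat R)) (Limits.colimit.isColimit D)
  obtain ⟨j, z, hz⟩ := Limits.Types.jointly_surjective_of_isColimit hc x
  have : IsNoetherian R ((localCohomology.ringModIdeals (localCohomology.idealPowersDiagram p)).obj j.unop) :=
    inferInstanceAs (IsNoetherian R (R ⧸ p ^ (unop (unop j))))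
  obtain ⟨k, y, hy⟩ := ext_div n hY ((localCohomology.ringModIdeals (localCohomology.idealPowersDiagram p)).obj j.unop) s z
  let F := (Limits.colimit.ι D j).app Y
  have hF : F z = x := hz
  refine ⟨k, F y, ?_⟩
  rw [← hF]
  have := congrArg F.hom hy
  exact (F.hom.map_smul _ _).symm.trans (this.trans (F.hom.map_smul _ _))

lemma injDimLE_of (R : Type) [CommRing R] (M : Type) [AddCommGroup M] [Module R M] (c : ℕ)
    (h : injDim R M = (c : ℕ∞)) : injDimLE R M c := by
  have hne : {n : ℕ∞ | ∃ m : ℕ, (m : ℕ∞) = n ∧ injDimLE R M m}.Nonempty := by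
    by_contra hne
    rw [Set.not_nonempty_iff_eq_empty] at hne
    rw [injDim, hne, sInf_empty] at h
    exact ENat.top_ne_natCast c h
  obtain ⟨m, hm, hm'⟩ := csInf_mem hne
  have : (m : ℕ∞) = c := hm.trans h
  rw [Nat.cast_inj] at this
  exact this ▸ hm'

lemma mem_tors (R : Type) [CommRing R] (J : Ideal R) (M : Type) [AddCommGroup M] [Module R M] (x : M) (k : ℕ)
    (h : ∀ a ∈ J ^ k, a • x = 0) : x ∈ torsionSubmodule R J M := by
  refine Submodule.mem_iSup_of_mem k ?_
  rw [Submodule.mem_torsionBySet_iff]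
  exact fun a => h a a.2

lemma ker_eq (R : Type) [CommRing R] [IsNoetherianRing R] (H : Type) [AddCommGroup H] [Module R H]
    (p : Ideal R) [p.IsPrime] (Q : Finset (Ideal R))
    (hAss : associatedPrimes R H = insert p (↑Q : Set (Ideal R)))
    (hQ : ∀ q ∈ Q, p < q) :
    LinearMap.ker (LocalizedModule.mkLinearMap p.primeCompl H) = torsionSubmodule R (∏ q ∈ Q, q) H := by
  have hker : ∀ h, h ∈ LinearMap.ker (LocalizedModule.mkLinearMap p.primeCompl H) ↔ ∃ s ∉ p, s • h = 0 := by
    intro h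
    rw [LinearMap.mem_ker, IsLocalizedModule.eq_zero_iff p.primeCompl]
    exact ⟨fun ⟨s, hs⟩ => ⟨s, s.2, hs⟩, fun ⟨s, hs, h⟩ => ⟨⟨s, hs⟩, h⟩⟩
  apply le_antisymm
  · intro h hh
    obtain ⟨s, hs, hsh⟩ := (hker h).1 hh
    let N := Submodule.span R {h}
    have hann : ∀ a, a ∈ Module.annihilator R N ↔ a • h = 0 := by
      intro a
      rw [← Submodule.annihilator, Submodule.mem_annihilator_span_singleton]
    have hle : (∏ q ∈ Q, q) ≤ (Module.annihilator R N).radical := by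
      rw [← Ideal.sInf_minimalPrimes]
      refine le_sInf fun q hq => ?_
      have hqa : q ∈ associatedPrimes R N := Module.associatedPrimes.minimalPrimes_annihilator_subset_associatedPrimes R N hq
      have hqH : q ∈ associatedPrimes R H := associatedPrimes.subset_of_injective N.injective_subtype hqa
      rw [hAss] at hqH
      have hqs : s ∈ q := hq.1.2 ((hann s).2 hsh)
      rcases hqH with rfl | hqQ
      · exact absurd hqs hs
      · exact Ideal.prod_le_inf.trans (Finset.inf_le hqQ)
    obtain ⟨k, hk⟩ := Ideal.exists_pow_le_of_le_radical_of_fg hle (IsNoetherian.noetherian _)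
    exact mem_tors R _ H h k fun a ha => (hann a).1 (hk ha)
  · refine iSup_le fun k h hh => ?_
    rw [hker]
    have hJ : ¬ (∏ q ∈ Q, q) ^ k ≤ p := by
      intro hle
      have h1 : (∏ q ∈ Q, q) ≤ p := Ideal.IsPrime.le_of_pow_le hle
      obtain ⟨q, hq, hqp⟩ := (Ideal.IsPrime.prod_le ‹_›).1 h1
      exact (hQ q hq).not_ge hqp
    obtain ⟨s, hs, hsp⟩ := SetLike.not_le_iff_exists.1 hJ
    exact ⟨s, hsp, (Submodule.mem_torsionBySet_iff _ _).1 hh ⟨s, hs⟩⟩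

lemma surj_of_div (R : Type) [CommRing R] (H : Type) [AddCommGroup H] [Module R H]
    (p : Ideal R) [p.IsPrime] (hd : ∀ (s : R) (x : H), ∃ (k : ℕ) (y : H), s ^ k • x = s ^ (k + 1) • y) :
    Function.Surjective (LocalizedModule.mkLinearMap p.primeCompl H) := by
  intro z
  induction z using LocalizedModule.induction_on with
  | h x s =>
    obtain ⟨k, y, hy⟩ := hd s x
    refine ⟨y, ?_⟩
    rw [LocalizedModule.mkLinearMap_apply, LocalizedModule.mk_eq]
    refine ⟨s ^ k, ?_⟩
    simp only [Submonoid.smul_def, SubmonoidClass.coe_pow, OneMemClass.coe_one, one_smul]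
    rw [hy, ← mul_smul, pow_succ]

end helpers

/-- `R` Noetherian, `M` with `inj.dim_R M = c < ∞`, `p` prime,
`Ass_R H_p^c(M) = {p, q_1, …, q_m}` with `p ⊊ q_i`, `J = q_1 ⋯ q_m`.  Then the natural
localization map induces an isomorphism `H_p^c(M)/Γ_J(H_p^c(M)) ≅ (H_p^c(M))_p`;
i.e. the localization map is surjective with kernel `Γ_J(H_p^c(M))`. -/
theorem stmt14 (R : Type) [CommRing R] [IsNoetherianRing R]
    (M : Type) [AddCommGroup M] [Module R M] (c : ℕ)
    (hinj : injDim R M = (c : ℕ∞))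
    (p : Ideal R) [p.IsPrime] (Q : Finset (Ideal R))
    (hAss : associatedPrimes R ((localCohomology p c).obj (ModuleCat.of R M))
      = insert p (↑Q : Set (Ideal R)))
    (hQ : ∀ q ∈ Q, p < q) :
    Function.Surjective
        (LocalizedModule.mkLinearMap p.primeCompl
          ((localCohomology p c).obj (ModuleCat.of R M))) ∧
      LinearMap.ker
          (LocalizedModule.mkLinearMap p.primeCompl
            ((localCohomology p c).obj (ModuleCat.of R M))) =
        torsionSubmodule R (∏ q ∈ Q, q)
          ((localCohomology p c).obj (ModuleCat.of R M)) := by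
  have hle := injDimLE_of R M c hinj
  exact ⟨surj_of_div R _ p (lc_div p c (fun X => hle X (c + 1) (Nat.lt_succ_self c))),
    ker_eq R _ p Q hAss hQ⟩

end
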